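/- arXiv:math/0009239 — 2 statements merged into one kernel-verified Lean document; each statement's English description precedes it below -/
import Mathlib

section
/- The map T : 𝔗(E) → Vect_pol(E) defined on each homogeneous component by T(M)(x) = −(1/(p+1)!) M(x, ..., x) for M ∈ 𝔗_p(E) and x ∈ E is an isomorphism of Lie algebras. -/
/-!
Each component of a multilinear map `M` on `E = 𝕜ⁿ` has a diagonal polynomial `x ↦ M(x, …, x)`.
Splitting off the first argument of `M`, that polynomial is `∑ₐ xₐ M(eₐ, x, …, x)`, and if `M` is
symmetric with `k + 1` arguments, a derivation `D` sends it to `(k + 1) ∑ₐ D(xₐ) M(eₐ, x, …, x)`.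

The derivative formula gives all of the theorem. For `D = T(M')` it computes the action of one
vector field on the coefficients of another, which is one half of the bracket of `𝔗(E)`, because
on the diagonal all permutations contribute the same term. For the partial derivatives it recovers
the maps `M(eₐ, …)`, and so `M` itself, from the diagonal polynomial. Conversely, Euler's identity
`(k + 1) p = ∑ₐ xₐ ∂ₐp` writes a homogeneous polynomial as the diagonal polynomial of a
multilinear map, and symmetrizing that map only multiplies its diagonal polynomial by the number
of permutations. Hence `T` is bijective from `𝔗_p(E)` to the vector fields with homogeneous
coefficients of degree `p + 1`.
-/

section SymMultilinear

variable (R : Type*) [Field R] (V : Type*) [AddCommGroup V] [Module R V]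

/-- `𝔗_{k-1}(V) ⊆` the `k`-multilinear maps: the symmetric ones.  (Here `k = p + 1` is the
number of arguments, so `SymT R V k` is the component `𝔗_p(V)` of `𝔗(V)`.) -/
def SymT (k : ℕ) : Submodule R (MultilinearMap R (fun _ : Fin k => V) V) where
  carrier := {M | ∀ (σ : Equiv.Perm (Fin k)) (v : Fin k → V), M (v ∘ σ) = M v}
  add_mem' := by intro a b ha hb σ v; simp [ha σ v, hb σ v]
  zero_mem' := by intro σ v; simp
  smul_mem' := by intro c a ha σ v; simp [ha σ v]

/-- The first half of the bracket of `𝔗(V)`: for `t ∈ 𝔗_p(V)` (with `k = p+1` arguments) and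
`t' ∈ 𝔗_q(V)` (with `l = q+1` arguments), this is
`x ↦ (1/(p!(q+1)!)) Σ_σ t(t'(x_{σ(0)},…,x_{σ(q)}), x_{σ(q+1)},…,x_{σ(p+q)})`,
the sum being over all permutations of `{0,…,p+q}`; it vanishes if `t` is a constant. -/
noncomputable def halfBracket (k l : ℕ) :
    MultilinearMap R (fun _ : Fin k => V) V → MultilinearMap R (fun _ : Fin l => V) V →
      (Fin (k + l - 1) → V) → V :=
  match k with
  | 0 => fun _ _ _ => 0
  | k' + 1 => fun t t' x =>
      (((k'.factorial * l.factorial : ℕ) : R))⁻¹ •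
        ∑ σ : Equiv.Perm (Fin (k' + 1 + l - 1)),
          t (Fin.cons
              (t' fun j : Fin l => x (σ ⟨j.1, by have := j.2; omega⟩))
              (fun j : Fin k' => x (σ ⟨l + j.1, by have := j.2; omega⟩)))

/-- The bracket of `𝔗(V)` on homogeneous components, as a function: for `t ∈ 𝔗_p(V)` and
`t' ∈ 𝔗_q(V)`, `[t,t'] ∈ 𝔗_{p+q}(V)` is given by
`[t,t'](x_0,…,x_{p+q}) = (1/(p!(q+1)!)) Σ_σ t(t'(x_{σ(0)},…,x_{σ(q)}), x_{σ(q+1)},…)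
  − (1/((p+1)!q!)) Σ_σ t'(t(x_{σ(0)},…,x_{σ(p)}), x_{σ(p+1)},…)`. -/
noncomputable def symBracketFun (k l : ℕ)
    (t : MultilinearMap R (fun _ : Fin k => V) V)
    (t' : MultilinearMap R (fun _ : Fin l => V) V) :
    (Fin (k + l - 1) → V) → V :=
  fun x => halfBracket R V k l t t' x -
    halfBracket R V l k t' t fun j => x (Fin.cast (by omega) j)

end SymMultilinear

open MvPolynomial DirectSum

/-- The Lie algebra of polynomial vector fields on `E = 𝕜^n`, realized as the
derivations of the polynomial algebra `𝕜[x_1, …, x_n]`. -/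
abbrev Vect (𝕜 : Type*) [Field 𝕜] (n : ℕ) : Type _ :=
  Derivation 𝕜 (MvPolynomial (Fin n) 𝕜) (MvPolynomial (Fin n) 𝕜)

variable (𝕜 : Type*) [Field 𝕜] (n : ℕ)

/-- The coefficients of the polynomial vector field `x ↦ -(1/(p+1)!) M(x, …, x)` associated
to a symmetric `(p+1)`-linear map `M ∈ 𝔗_p(E)` (`k = p+1`), expanded multilinearly in the
standard basis of `E = 𝕜^n`. -/
noncomputable def vectCoeffs (k : ℕ) :
    ↥(SymT 𝕜 (Fin n → 𝕜) k) →ₗ[𝕜] (Fin n → MvPolynomial (Fin n) 𝕜) where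
  toFun M := fun i =>
    (-((k.factorial : ℕ) : 𝕜)⁻¹) • ∑ f : Fin k → Fin n,
      ((M : MultilinearMap 𝕜 (fun _ : Fin k => (Fin n → 𝕜)) (Fin n → 𝕜))
          (fun j => Pi.single (f j) 1) i) • ∏ j, MvPolynomial.X (f j)
  map_add' M N := by
    funext i
    simp [add_smul, Finset.sum_add_distrib, smul_add]
  map_smul' c M := by
    funext i
    simp only [SetLike.val_smul, MultilinearMap.smul_apply, Pi.smul_apply, smul_eq_mul,
      RingHom.id_apply, mul_smul, ← Finset.smul_sum]
    rw [smul_comm]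

/-- The map `T : 𝔗(E) → Vect_pol(E)`, `T(M)(x) = -(1/(p+1)!) M(x, …, x)` for
`M ∈ 𝔗_p(E)`. -/
noncomputable def TT : (⨁ k : ℕ, ↥(SymT 𝕜 (Fin n → 𝕜) k)) →ₗ[𝕜] Vect 𝕜 n :=
  DirectSum.toModule 𝕜 ℕ (Vect 𝕜 n) fun k =>
    (MvPolynomial.mkDerivationEquiv 𝕜).toLinearMap ∘ₗ vectCoeffs 𝕜 n k

section SymmetricMultilinear

variable {R V W : Type*} [CommSemiring R] [AddCommMonoid V] [Module R V] [AddCommMonoid W]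
  [Module R W] {k : ℕ}

/-- Symmetry of a multilinear map with values in an arbitrary module; for maps with values in `V`
this is membership in `SymT`. It is needed for the scalar components of such maps. -/
def IsSymmetricMultilinear (M : MultilinearMap R (fun _ : Fin k => V) W) : Prop :=
  ∀ (σ : Equiv.Perm (Fin k)) (v : Fin k → V), M (v ∘ σ) = M v

theorem IsSymmetricMultilinear.curryLeft {M : MultilinearMap R (fun _ : Fin (k + 1) => V) W}
    (hM : IsSymmetricMultilinear M) (x : V) : IsSymmetricMultilinear (M.curryLeft x) := by
  intro σ v
  have cons_comp : (Fin.cons x (v ∘ σ) : Fin (k + 1) → V) =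
      Fin.cons x v ∘ Equiv.Perm.decomposeFin.symm (0, σ) := by
    ext j
    cases j using Fin.cases <;> simp
  rw [MultilinearMap.curryLeft_apply, cons_comp, hM, MultilinearMap.curryLeft_apply]

theorem IsSymmetricMultilinear.curryLeft_comm
    {M : MultilinearMap R (fun _ : Fin (k + 2) => V) W} (hM : IsSymmetricMultilinear M) (x y : V) :
    (M.curryLeft x).curryLeft y = (M.curryLeft y).curryLeft x := by
  ext v
  have swap_eq := hM (Equiv.swap 0 1) (Matrix.vecCons y (Matrix.vecCons x v))
  rwa [Matrix.cons_cons_comp_swap_zero_one] at swap_eq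

/-- The symmetrization of a multilinear map, not divided by the number `k!` of permutations. -/
def symmetrization (M : MultilinearMap R (fun _ : Fin k => V) W) :
    MultilinearMap R (fun _ : Fin k => V) W :=
  ∑ σ : Equiv.Perm (Fin k), M.domDomCongr σ

theorem isSymmetricMultilinear_symmetrization (M : MultilinearMap R (fun _ : Fin k => V) W) :
    IsSymmetricMultilinear (symmetrization M) := by
  intro τ v
  simp only [symmetrization, _root_.sum_apply, MultilinearMap.domDomCongr_apply]
  exact Fintype.sum_equiv (Equiv.mulLeft τ) _ _ fun σ => rfl

end SymmetricMultilinear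

theorem halfBracket_succ_diagonal {R V : Type*} [Field R] [AddCommGroup V] [Module R V] (k l : ℕ)
    (t : MultilinearMap R (fun _ : Fin (k + 1) => V) V)
    (t' : MultilinearMap R (fun _ : Fin l => V) V) (x : V) :
    halfBracket R V (k + 1) l t t' (fun _ => x) =
      (((k + 1 + l - 1).factorial : R) / (k.factorial * l.factorial)) •
        t (Fin.cons (t' fun _ => x) fun _ => x) := by
  simp only [halfBracket, Finset.sum_const, Finset.card_univ, Fintype.card_perm, Fintype.card_fin,
    ← Nat.cast_smul_eq_nsmul R, smul_smul, Nat.cast_mul]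
  rw [div_eq_inv_mul]

section DiagonalPolynomial

variable {R σ : Type*} [CommSemiring R] [Fintype σ] [DecidableEq σ] {k : ℕ}

/-- The polynomial `x ↦ M(x, …, x)` of a multilinear form `M` on `R^σ`, expanded in the standard
basis. -/
noncomputable def diagonalPolynomial :
    MultilinearMap R (fun _ : Fin k => σ → R) R →ₗ[R] MvPolynomial σ R where
  toFun M := ∑ f : Fin k → σ, M (fun j => Pi.single (f j) 1) • ∏ j, X (f j)
  map_add' M N := by
    simp only [_root_.add_apply, add_smul, Finset.sum_add_distrib]
  map_smul' c M := by
    simp only [_root_.smul_apply, smul_eq_mul, mul_smul, Finset.smul_sum, RingHom.id_apply]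

theorem diagonalPolynomial_apply (M : MultilinearMap R (fun _ : Fin k => σ → R) R) :
    diagonalPolynomial M =
      ∑ f : Fin k → σ, M (fun j => Pi.single (f j) 1) • ∏ j, (X (f j) : MvPolynomial σ R) :=
  rfl

theorem diagonalPolynomial_fin_zero (M : MultilinearMap R (fun _ : Fin 0 => σ → R) R) :
    diagonalPolynomial M = C (M 0) := by
  simp only [diagonalPolynomial_apply, Finset.univ_eq_empty, Finset.prod_empty,
    Fintype.sum_unique, smul_eq_C_mul, mul_one]
  exact congrArg (C ∘ M) (Subsingleton.elim _ _)

theorem diagonalPolynomial_succ (M : MultilinearMap R (fun _ : Fin (k + 1) => σ → R) R) :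
    diagonalPolynomial M = ∑ a, X a * diagonalPolynomial (M.curryLeft (Pi.single a 1)) := by
  have cons_single (a : σ) (f : Fin k → σ) :
      (fun j => Pi.single ((Fin.cons a f : Fin (k + 1) → σ) j) 1 : Fin (k + 1) → σ → R) =
        Fin.cons (Pi.single a 1) fun j => Pi.single (f j) 1 := by
    ext j
    cases j using Fin.cases <;> rfl
  simp only [diagonalPolynomial_apply, ← (Fin.consEquiv fun _ => σ).sum_comp,
    Fintype.sum_prod_type, Fin.consEquiv_apply, cons_single, Fin.prod_univ_succ, Fin.cons_zero,
    Fin.cons_succ, MultilinearMap.curryLeft_apply, Finset.mul_sum, mul_smul_comm]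

theorem sum_mul_curryLeft_single (M : MultilinearMap R (fun _ : Fin (k + 1) => σ → R) R) (x : σ → R)
    (v : Fin k → σ → R) : ∑ a, x a * M.curryLeft (Pi.single a 1) v = M (Fin.cons x v) := by
  conv_rhs => rw [pi_eq_sum_univ' x, ← MultilinearMap.curryLeft_apply]
  simp only [map_sum, map_smul, _root_.sum_apply, _root_.smul_apply, smul_eq_mul]

theorem eval_diagonalPolynomial (M : MultilinearMap R (fun _ : Fin k => σ → R) R) (x : σ → R) :
    eval x (diagonalPolynomial M) = M fun _ => x := by
  induction k with
  | zero =>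
    rw [diagonalPolynomial_fin_zero, eval_C]
    exact congrArg M (Subsingleton.elim _ _)
  | succ k ih =>
    simp only [diagonalPolynomial_succ, map_sum, map_mul, eval_X, ih, sum_mul_curryLeft_single]
    exact congrArg M (Fin.cons_self_tail fun _ => x)

theorem isHomogeneous_diagonalPolynomial (M : MultilinearMap R (fun _ : Fin k => σ → R) R) :
    (diagonalPolynomial M).IsHomogeneous k := by
  induction k with
  | zero =>
    rw [diagonalPolynomial_fin_zero]
    exact isHomogeneous_C _ _
  | succ k ih =>
    rw [diagonalPolynomial_succ]
    refine IsHomogeneous.sum _ _ _ fun a _ => ?_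
    simpa only [add_comm] using (isHomogeneous_X R a).mul (ih (M.curryLeft (Pi.single a 1)))

theorem derivation_diagonalPolynomial {A : Type*} [AddCommMonoid A] [Module R A]
    [Module (MvPolynomial σ R) A] (D : Derivation R (MvPolynomial σ R) A)
    {M : MultilinearMap R (fun _ : Fin (k + 1) => σ → R) R} (hM : IsSymmetricMultilinear M) :
    D (diagonalPolynomial M) =
      (k + 1) • ∑ a, diagonalPolynomial (M.curryLeft (Pi.single a 1)) • D (X a) := by
  induction k with
  | zero =>
    simp only [diagonalPolynomial_succ M, diagonalPolynomial_fin_zero, map_sum,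
      Derivation.leibniz, derivation_C, smul_zero, zero_add, one_smul]
  | succ k ih =>
    have swap_first_two : ∑ a, (X a : MvPolynomial σ R) • ∑ b,
          diagonalPolynomial ((M.curryLeft (Pi.single a 1)).curryLeft (Pi.single b 1)) • D (X b) =
        ∑ b, diagonalPolynomial (M.curryLeft (Pi.single b 1)) • D (X b) := by
      simp only [diagonalPolynomial_succ (M.curryLeft _), Finset.smul_sum, Finset.sum_smul,
        smul_smul]
      rw [Finset.sum_comm]
      exact Finset.sum_congr rfl fun b _ => Finset.sum_congr rfl fun a _ => by
        rw [hM.curryLeft_comm]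
    rw [diagonalPolynomial_succ]
    simp only [map_sum, Derivation.leibniz, ih (hM.curryLeft _), Finset.sum_add_distrib,
      smul_comm (X _ : MvPolynomial σ R) (k + 1), ← Finset.smul_sum, swap_first_two]
    rw [succ_nsmul _ (k + 1)]

theorem eval_derivation_diagonalPolynomial (D : Derivation R (MvPolynomial σ R) (MvPolynomial σ R))
    {M : MultilinearMap R (fun _ : Fin (k + 1) => σ → R) R} (hM : IsSymmetricMultilinear M)
    (x : σ → R) :
    eval x (D (diagonalPolynomial M)) =
      (k + 1 : ℕ) * M (Fin.cons (fun a => eval x (D (X a))) fun _ => x) := by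
  rw [derivation_diagonalPolynomial D hM, ← sum_mul_curryLeft_single]
  simp only [nsmul_eq_mul, map_mul, map_natCast, map_sum, smul_eq_mul,
    eval_diagonalPolynomial, mul_comm (eval x (D (X _)))]

theorem IsSymmetricMultilinear.eq_zero_of_diagonalPolynomial_eq_zero [CharZero R] [NoZeroDivisors R]
    {M : MultilinearMap R (fun _ : Fin k => σ → R) R} (hM : IsSymmetricMultilinear M)
    (h : diagonalPolynomial M = 0) : M = 0 := by
  induction k with
  | zero =>
    rw [diagonalPolynomial_fin_zero, C_eq_zero] at h
    exact MultilinearMap.ext fun v => by rwa [Subsingleton.elim v 0]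
  | succ k ih =>
    have curryLeft_single (a : σ) : M.curryLeft (Pi.single a 1) = 0 := by
      have pderiv_eq := derivation_diagonalPolynomial (pderiv a) hM
      simp only [h, map_zero, pderiv_X, Pi.single_apply, smul_eq_mul, mul_ite, mul_one, mul_zero,
        Finset.sum_ite_eq', Finset.mem_univ, if_true] at pderiv_eq
      rw [eq_comm, nsmul_eq_mul, mul_eq_zero_iff_left (Nat.cast_ne_zero.2 k.succ_ne_zero)]
        at pderiv_eq
      exact ih (hM.curryLeft _) pderiv_eq
    have curryLeft_eq : M.curryLeft = 0 := LinearMap.pi_ext' fun a => LinearMap.ext_ring <| by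
      simpa using curryLeft_single a
    rw [← M.uncurry_curryLeft, curryLeft_eq]
    rfl

theorem diagonalPolynomial_symmetrization (M : MultilinearMap R (fun _ : Fin k => σ → R) R) :
    diagonalPolynomial (symmetrization M) = k.factorial • diagonalPolynomial M := by
  have domDomCongr_eq (τ : Equiv.Perm (Fin k)) :
      diagonalPolynomial (M.domDomCongr τ) = diagonalPolynomial M := by
    refine Fintype.sum_equiv (τ.symm.arrowCongr (Equiv.refl σ)) _ _ fun f => ?_
    exact congrArg₂ (· • ·) rfl (Equiv.prod_comp τ fun j => X (f j)).symm
  simp only [symmetrization, map_sum, domDomCongr_eq, Finset.sum_const, Finset.card_univ,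
    Fintype.card_perm, Fintype.card_fin]

end DiagonalPolynomial

theorem exists_diagonalPolynomial_eq {K σ : Type*} [Field K] [CharZero K] [Fintype σ]
    [DecidableEq σ] {k : ℕ} {p : MvPolynomial σ K} (hp : p.IsHomogeneous k) :
    ∃ M : MultilinearMap K (fun _ : Fin k => σ → K) K, diagonalPolynomial M = p := by
  induction k generalizing p with
  | zero =>
    obtain ⟨r, rfl⟩ : ∃ r, p = C r :=
      ⟨_, totalDegree_eq_zero_iff_eq_C.1 ((totalDegree_zero_iff_isHomogeneous σ).2 hp)⟩
    exact ⟨MultilinearMap.constOfIsEmpty K _ r, by simp [diagonalPolynomial_fin_zero]⟩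
  | succ k ih =>
    choose N hN using fun a => ih (hp.pderiv (i := a))
    let L : (σ → K) →ₗ[K] MultilinearMap K (fun _ : Fin k => σ → K) K :=
      ((k + 1 : ℕ) : K)⁻¹ • Fintype.linearCombination K N
    let M : MultilinearMap K (fun _ : Fin (k + 1) => σ → K) K := L.uncurryLeft
    have curryLeft_single (a : σ) :
        M.curryLeft (Pi.single a 1) = ((k + 1 : ℕ) : K)⁻¹ • N a := by
      simp [M, L, Fintype.linearCombination_apply_single]
    refine ⟨M, ?_⟩
    calc diagonalPolynomial M
        = ((k + 1 : ℕ) : K)⁻¹ • ∑ a, X a * pderiv a p := by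
          simp only [diagonalPolynomial_succ, curryLeft_single, map_smul, hN, mul_smul_comm,
            Finset.smul_sum]
      _ = p := by
          rw [hp.sum_X_mul_pderiv, ← Nat.cast_smul_eq_nsmul K,
            inv_smul_smul₀ (Nat.cast_ne_zero.2 k.succ_ne_zero)]

theorem sum_range_homogeneousComponent {R σ : Type*} [CommSemiring R] {p : MvPolynomial σ R}
    {N : ℕ} (hN : p.totalDegree < N) : ∑ m ∈ Finset.range N, homogeneousComponent m p = p := by
  conv_rhs => rw [← sum_homogeneousComponent p]
  refine (Finset.sum_subset (Finset.range_mono hN) fun m _ hm => ?_).symm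
  exact homogeneousComponent_eq_zero _ _ (by simpa [Nat.lt_succ_iff] using hm)

section VectorFields

variable {𝕜 : Type*} [Field 𝕜] {n k l : ℕ}

theorem SymT.isSymmetricMultilinear_component (M : SymT 𝕜 (Fin n → 𝕜) k) (i : Fin n) :
    IsSymmetricMultilinear ((LinearMap.proj i : (Fin n → 𝕜) →ₗ[𝕜] 𝕜).compMultilinearMap M.1) :=
  fun σ v => congrFun (M.2 σ v) i

theorem vectCoeffs_eq_diagonalPolynomial (M : SymT 𝕜 (Fin n → 𝕜) k) (i : Fin n) :
    vectCoeffs 𝕜 n k M i = (-(k.factorial : 𝕜)⁻¹) •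
      diagonalPolynomial ((LinearMap.proj i : (Fin n → 𝕜) →ₗ[𝕜] 𝕜).compMultilinearMap M.1) :=
  rfl

theorem eval_vectCoeffs (M : SymT 𝕜 (Fin n → 𝕜) k) (x : Fin n → 𝕜) :
    (fun i => eval x (vectCoeffs 𝕜 n k M i)) = (-(k.factorial : 𝕜)⁻¹) • M.1 fun _ => x := by
  ext i
  rw [vectCoeffs_eq_diagonalPolynomial, smul_eval, eval_diagonalPolynomial]
  rfl

theorem isHomogeneous_vectCoeffs (M : SymT 𝕜 (Fin n → 𝕜) k) (i : Fin n) :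
    (vectCoeffs 𝕜 n k M i).IsHomogeneous k := by
  rw [vectCoeffs_eq_diagonalPolynomial]
  exact (homogeneousSubmodule (Fin n) 𝕜 k).smul_mem _ (isHomogeneous_diagonalPolynomial _)

theorem vectCoeffs_injective [CharZero 𝕜] (k : ℕ) : Function.Injective (vectCoeffs 𝕜 n k) := by
  refine (injective_iff_map_eq_zero _).2 fun M hM =>
    Subtype.ext (MultilinearMap.ext fun v => funext fun i => ?_)
  have h := congrFun hM i
  rw [vectCoeffs_eq_diagonalPolynomial, Pi.zero_apply,
    smul_eq_zero_iff_right (by simp [Nat.factorial_ne_zero])] at h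
  exact DFunLike.congr_fun
    ((SymT.isSymmetricMultilinear_component M i).eq_zero_of_diagonalPolynomial_eq_zero h) v

theorem exists_vectCoeffs_eq [CharZero 𝕜] {c : Fin n → MvPolynomial (Fin n) 𝕜}
    (hc : ∀ i, (c i).IsHomogeneous k) : ∃ M, vectCoeffs 𝕜 n k M = c := by
  choose N hN using fun i => exists_diagonalPolynomial_eq (hc i).neg
  let M : SymT 𝕜 (Fin n → 𝕜) k :=
    ⟨symmetrization (MultilinearMap.pi N), isSymmetricMultilinear_symmetrization _⟩
  have component (i : Fin n) :
      (LinearMap.proj i : (Fin n → 𝕜) →ₗ[𝕜] 𝕜).compMultilinearMap M.1 = symmetrization (N i) := by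
    ext v
    simp [M, symmetrization]
  refine ⟨M, funext fun i => ?_⟩
  rw [vectCoeffs_eq_diagonalPolynomial, component, diagonalPolynomial_symmetrization, hN,
    neg_smul, smul_neg, smul_neg, neg_neg, ← Nat.cast_smul_eq_nsmul 𝕜,
    inv_smul_smul₀ (Nat.cast_ne_zero.2 k.factorial_ne_zero)]

theorem TT_of (M : SymT 𝕜 (Fin n → 𝕜) k) :
    TT 𝕜 n (DirectSum.of (fun k => ↥(SymT 𝕜 (Fin n → 𝕜) k)) k M) =
      mkDerivation 𝕜 (vectCoeffs 𝕜 n k M) :=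
  DirectSum.toModule_lof 𝕜
    (φ := fun k => (mkDerivationEquiv 𝕜).toLinearMap ∘ₗ vectCoeffs 𝕜 n k) k M

theorem homogeneousComponent_TT (a : ⨁ k : ℕ, ↥(SymT 𝕜 (Fin n → 𝕜) k)) (m : ℕ) (i : Fin n) :
    homogeneousComponent m (TT 𝕜 n a (X i)) = vectCoeffs 𝕜 n m (a m) i := by
  induction a using DirectSum.induction_on with
  | zero => simp
  | of k M =>
    rw [TT_of, mkDerivation_X, homogeneousComponent_of_mem (isHomogeneous_vectCoeffs M i)]
    split_ifs with hm
    · subst hm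
      rw [DirectSum.of_eq_same]
    · rw [DirectSum.of_eq_of_ne _ _ _ hm, map_zero, Pi.zero_apply]
  | add a b ha hb =>
    simp only [map_add, Derivation.add_apply, ha, hb, DirectSum.add_apply, Pi.add_apply]

theorem TT_injective [CharZero 𝕜] : Function.Injective (TT 𝕜 n) := by
  intro a b hab
  refine DFinsupp.ext fun m => vectCoeffs_injective m (funext fun i => ?_)
  rw [← homogeneousComponent_TT, hab, homogeneousComponent_TT]

theorem TT_surjective [CharZero 𝕜] : Function.Surjective (TT 𝕜 n) := by
  intro D
  choose M hM using fun m => exists_vectCoeffs_eq fun i =>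
    homogeneousComponent_isHomogeneous m (D (X i))
  let N := Finset.univ.sup fun i => (D (X i)).totalDegree
  refine ⟨∑ m ∈ Finset.range (N + 1), DirectSum.of _ m (M m), derivation_ext fun i => ?_⟩
  have degree_lt : (D (X i)).totalDegree < N + 1 :=
    Nat.lt_succ_of_le (Finset.le_sup (f := fun i => (D (X i)).totalDegree) (Finset.mem_univ i))
  conv_rhs => rw [← sum_range_homogeneousComponent degree_lt]
  rw [map_sum, ← Derivation.coeFnAddMonoidHom_apply, map_sum, Finset.sum_apply]
  simp only [Derivation.coeFnAddMonoidHom_apply, TT_of, hM, mkDerivation_X]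

theorem eval_mkDerivation_vectCoeffs [CharZero 𝕜] (M : SymT 𝕜 (Fin n → 𝕜) k)
    (M' : SymT 𝕜 (Fin n → 𝕜) l) (x : Fin n → 𝕜) (i : Fin n) :
    eval x (mkDerivation 𝕜 (vectCoeffs 𝕜 n l M') (vectCoeffs 𝕜 n k M i)) =
      ((k + l - 1).factorial : 𝕜)⁻¹ * halfBracket 𝕜 (Fin n → 𝕜) k l M.1 M'.1 (fun _ => x) i := by
  cases k with
  | zero =>
    rw [vectCoeffs_eq_diagonalPolynomial, diagonalPolynomial_fin_zero]
    simp [halfBracket]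
  | succ k =>
    have factorial_cast_ne_zero (m : ℕ) : (m.factorial : 𝕜) ≠ 0 :=
      Nat.cast_ne_zero.2 m.factorial_ne_zero
    have cons_smul := congrFun
      (M.1.cons_smul (fun _ => x) (-(l.factorial : 𝕜)⁻¹) (M'.1 fun _ => x)) i
    simp only [Pi.smul_apply, smul_eq_mul] at cons_smul
    rw [vectCoeffs_eq_diagonalPolynomial, Derivation.map_smul, smul_eval,
      eval_derivation_diagonalPolynomial _ (SymT.isSymmetricMultilinear_component M i),
      halfBracket_succ_diagonal]
    simp only [mkDerivation_X, eval_vectCoeffs, LinearMap.compMultilinearMap_apply,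
      LinearMap.proj_apply, Pi.smul_apply, smul_eq_mul, cons_smul, Nat.factorial_succ]
    push_cast
    field_simp [factorial_cast_ne_zero]

theorem eval_lie_TT_of [CharZero 𝕜] (M : SymT 𝕜 (Fin n → 𝕜) k) (M' : SymT 𝕜 (Fin n → 𝕜) l)
    (x : Fin n → 𝕜) (i : Fin n) :
    eval x (⁅TT 𝕜 n (DirectSum.of (fun k => ↥(SymT 𝕜 (Fin n → 𝕜) k)) k M),
        TT 𝕜 n (DirectSum.of (fun k => ↥(SymT 𝕜 (Fin n → 𝕜) k)) l M')⁆ (X i)) =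
      -((k + l - 1).factorial : 𝕜)⁻¹ * symBracketFun 𝕜 (Fin n → 𝕜) k l M M' (fun _ => x) i := by
  rw [TT_of, TT_of, Derivation.commutator_apply, mkDerivation_X, mkDerivation_X, map_sub,
    eval_mkDerivation_vectCoeffs M' M, eval_mkDerivation_vectCoeffs M M',
    show (l + k - 1).factorial = (k + l - 1).factorial by rw [Nat.add_comm]]
  simp only [symBracketFun, Pi.sub_apply]
  ring

end VectorFields

theorem statement10_general (𝕜 : Type*) [Field 𝕜] [CharZero 𝕜] (n : ℕ) :
    Function.Bijective (TT 𝕜 n) ∧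
    ∀ (k l : ℕ) (M : ↥(SymT 𝕜 (Fin n → 𝕜) k)) (M' : ↥(SymT 𝕜 (Fin n → 𝕜) l))
      (x : Fin n → 𝕜) (i : Fin n),
      MvPolynomial.eval x
          (⁅TT 𝕜 n (DirectSum.of (fun k => ↥(SymT 𝕜 (Fin n → 𝕜) k)) k M),
            TT 𝕜 n (DirectSum.of (fun k => ↥(SymT 𝕜 (Fin n → 𝕜) k)) l M')⁆
            (MvPolynomial.X i)) =
        -((((k + l - 1).factorial : ℕ) : 𝕜))⁻¹ *
          symBracketFun 𝕜 (Fin n → 𝕜) k l M M' (fun _ => x) i :=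
  ⟨⟨TT_injective, TT_surjective⟩, fun _ _ => eval_lie_TT_of⟩

/-- The map `T : 𝔗(E) → Vect_pol(E)` defined by `T(M)(x) = -(1/(p+1)!) M(x,…,x)` on
`𝔗_p(E)` is an isomorphism of Lie algebras: it is a linear bijection and it intertwines the
bracket of `𝔗(E)` (given on homogeneous components by `symBracketFun`) with the bracket of
vector fields (stated here after evaluation at an arbitrary point `x`, which determines the
polynomial vector field `T[M, M']`). -/
theorem statement10 (𝕜 : Type) [RCLike 𝕜] (n : ℕ) (hn : 0 < n) :
    Function.Bijective (TT 𝕜 n) ∧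
    ∀ (k l : ℕ) (M : ↥(SymT 𝕜 (Fin n → 𝕜) k)) (M' : ↥(SymT 𝕜 (Fin n → 𝕜) l))
      (x : Fin n → 𝕜) (i : Fin n),
      MvPolynomial.eval x
          (⁅TT 𝕜 n (DirectSum.of (fun k => ↥(SymT 𝕜 (Fin n → 𝕜) k)) k M),
            TT 𝕜 n (DirectSum.of (fun k => ↥(SymT 𝕜 (Fin n → 𝕜) k)) l M')⁆
            (MvPolynomial.X i)) =
        -((((k + l - 1).factorial : ℕ) : 𝕜))⁻¹ *
          symBracketFun 𝕜 (Fin n → 𝕜) k l M M' (fun _ => x) i :=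
  statement10_general 𝕜 n
end

section
/- Let E be a finite-dimensional complex vector space of dimension n ≥ 1 and let L = L_{−1} ⊕ L_0 ⊕ L_1 be an irreducible graded Lie subalgebra of Vect_pol(E) with L_{−1} = Vect_{−1}(E) and L_1 ≠ 0. Then every finite-dimensional Lie subalgebra L' of Vect_pol(E) containing L equals L. -/
/-!
Let `V = L₋₁` be the space of all constant fields and let `M` be a finite-dimensional subalgebra
containing `L`. Bracketing a nonzero polynomial field repeatedly with constant fields eventually
gives a nonzero constant field, so by irreducibility every nonzero `L`-stable space of fields
contains `V`.

In particular a nonzero abelian ideal of `L` contains `V` and hence also `[V, L₁]`, which forces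
`[V, [V, L₁]] = 0` and so `L₁ = 0`. Thus `L` is semisimple, and Cartan's criterion shows that `L`
meets its orthogonal complement for the Killing form of `M` trivially. This complement is `L`-stable
and does not contain `V ⊆ L`, so it vanishes, and `L = M`.
-/

open MvPolynomial

variable (𝕜 : Type*) [Field 𝕜] (n : ℕ)

/-- The Euler vector field `ℰ = Σ x^j ∂_j`. -/
noncomputable def euler : Vect 𝕜 n :=
  MvPolynomial.mkDerivation 𝕜 fun i => MvPolynomial.X i

/-- `Vect_p(E)`: the eigenspace of `ad(ℰ)` for the eigenvalue `p`, i.e. the vector fields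
with homogeneous coefficients of degree `p+1`. -/
noncomputable def VectP (p : ℤ) : Submodule 𝕜 (Vect 𝕜 n) :=
  Module.End.eigenspace (LieAlgebra.ad 𝕜 (Vect 𝕜 n) (euler 𝕜 n)) ((p : 𝕜))

/-- A Lie subalgebra `L` of `Vect_pol(E)` is graded if `L = ⊕_{p ≥ -1} (L ∩ Vect_p(E))`. -/
def IsGradedSubalg (L : LieSubalgebra 𝕜 (Vect 𝕜 n)) : Prop :=
  L.toSubmodule = ⨆ p ≥ (-1 : ℤ), (L.toSubmodule ⊓ VectP 𝕜 n p)

/-- A Lie subalgebra `L` of `Vect_pol(E)` is maximal if the only subalgebras containing it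
are `L` itself and `Vect_pol(E)`. -/
def IsMaxSubalg (L : LieSubalgebra 𝕜 (Vect 𝕜 n)) : Prop :=
  ∀ L' : LieSubalgebra 𝕜 (Vect 𝕜 n), L ≤ L' → L' = L ∨ L' = ⊤

/-- A graded subalgebra `L` is irreducible if the representation of `L₀ = L ∩ Vect_0(E)` on
`L₋₁ = L ∩ Vect_{-1}(E)` given by the adjoint action is irreducible. -/
def IsIrreducibleRep (L : LieSubalgebra 𝕜 (Vect 𝕜 n)) : Prop :=
  L.toSubmodule ⊓ VectP 𝕜 n (-1) ≠ ⊥ ∧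
    ∀ F : Submodule 𝕜 (Vect 𝕜 n), F ≤ L.toSubmodule ⊓ VectP 𝕜 n (-1) →
      (∀ x ∈ L.toSubmodule ⊓ VectP 𝕜 n 0, ∀ y ∈ F, ⁅x, y⁆ ∈ F) →
      F = ⊥ ∨ F = L.toSubmodule ⊓ VectP 𝕜 n (-1)

section LieAlgebra

open LieAlgebra Module.End

lemma lie_mem_eigenspace_ad {R A : Type*} [CommRing R] [LieRing A] [LieAlgebra R A] {e x y : A}
    {a b : R} (hx : x ∈ eigenspace (ad R A e) a) (hy : y ∈ eigenspace (ad R A e) b) :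
    ⁅x, y⁆ ∈ eigenspace (ad R A e) (a + b) := by
  rw [mem_eigenspace_iff, ad_apply] at hx hy ⊢
  rw [leibniz_lie, hx, hy, smul_lie, lie_smul, add_smul]

variable {K M : Type*} [Field K] [LieRing M] [LieAlgebra K M]

/-- The orthogonal complement of a subalgebra `L` of `M` for the Killing form of `M`, as an
`L`-submodule of `M`. -/
noncomputable def killingOrthogonal (L : LieSubalgebra K M) : LieSubmodule K L M :=
  InvariantForm.orthogonal (killingForm K M)
    (fun x => LieModule.traceForm_lieInvariant K M M (x : M)) L.toLieSubmodule

lemma mem_killingOrthogonal {L : LieSubalgebra K M} {x : M} :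
    x ∈ killingOrthogonal L ↔ ∀ y ∈ L, killingForm K M y x = 0 :=
  InvariantForm.mem_orthogonal ..

variable [CharZero K] [FiniteDimensional K M]

lemma isSolvable_of_traceForm_eq_zero {S : LieSubalgebra K M}
    (h : LieModule.traceForm K S M = 0) : IsSolvable S := by
  have hM : LieModule.IsNilpotent (derivedSeries K S 1) M :=
    LieModule.isNilpotent_derivedSeries_of_traceForm_eq_zero h
  have hS : LieRing.IsNilpotent (derivedSeries K S 1) := by
    rw [LieAlgebra.isNilpotent_iff_forall (R := K)]
    intro x
    apply LieSubalgebra.isNilpotent_ad_of_isNilpotent_ad (derivedSeries K S 1 : LieSubalgebra K S)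
    apply LieSubalgebra.isNilpotent_ad_of_isNilpotent_ad S
    exact (LieModule.isNilpotent_iff_forall' (R := K)).mp hM x
  obtain ⟨k, hk⟩ := IsSolvable.solvable K (derivedSeries K S 1)
  rw [LieIdeal.derivedSeries_eq_bot_iff] at hk
  refine IsSolvable.mk (R := K) (k := k + 1) ?_
  rwa [derivedSeries_def, derivedSeriesOfIdeal_add]

lemma isSolvable_of_injective_of_killingForm_eq_zero {S : Type*} [LieRing S] [LieAlgebra K S]
    {f : S →ₗ⁅K⁆ M} (hf : Function.Injective f)
    (h : ∀ x y, killingForm K M (f x) (f y) = 0) : IsSolvable S := by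
  have hrange : LieModule.traceForm K f.range M = 0 := by
    ext ⟨_, x, rfl⟩ ⟨_, y, rfl⟩
    exact h x y
  have := isSolvable_of_traceForm_eq_zero hrange
  exact (LieEquiv.ofInjective f hf).injective.lieAlgebra_isSolvable

lemma disjoint_killingOrthogonal (L : LieSubalgebra K M) [HasTrivialRadical K L] :
    Disjoint L.toLieSubmodule (killingOrthogonal L) := by
  let I : LieIdeal K L := (killingOrthogonal L).comap L.incl'
  have hI : IsSolvable I := by
    refine isSolvable_of_injective_of_killingForm_eq_zero (f := L.incl.comp I.incl)
      (Subtype.val_injective.comp Subtype.val_injective) fun x y => ?_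
    exact mem_killingOrthogonal.mp y.2 (x : L) (x : L).2
  have hI_bot : I = ⊥ := HasTrivialRadical.eq_bot_of_isSolvable I
  rw [← LieSubmodule.disjoint_toSubmodule, Submodule.disjoint_def]
  intro x hxL hx
  have hxI : (⟨x, hxL⟩ : L) ∈ I := hx
  rw [hI_bot, LieSubmodule.mem_bot] at hxI
  exact congrArg Subtype.val hxI

lemma isCompl_killingOrthogonal (L : LieSubalgebra K M) [HasTrivialRadical K L] :
    IsCompl L.toLieSubmodule (killingOrthogonal L) := by
  rw [← LieSubmodule.isCompl_toSubmodule]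
  refine (LinearMap.BilinForm.isCompl_orthogonal_iff_disjoint
    (LieModule.traceForm_isSymm K M M).isRefl).mpr ?_
  exact LieSubmodule.disjoint_toSubmodule.mpr (disjoint_killingOrthogonal L)

lemma eq_top_of_forall_not_disjoint (L : LieSubalgebra K M) [HasTrivialRadical K L]
    (h : ∀ N : LieSubmodule K L M, N ≠ ⊥ → ¬ Disjoint L.toLieSubmodule N) : L = ⊤ := by
  have hbot : killingOrthogonal L = ⊥ := by
    by_contra hne
    exact h _ hne (disjoint_killingOrthogonal L)
  have htop : L.toLieSubmodule = ⊤ := eq_top_of_isCompl_bot (hbot ▸ isCompl_killingOrthogonal L)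
  exact LieSubalgebra.toSubmodule_injective (congrArg LieSubmodule.toSubmodule htop)

end LieAlgebra

section Polynomial

variable {R σ : Type*} [CommSemiring R]

lemma derivation_apply_eq_sum_pderiv_smul [Fintype σ] {A : Type*} [AddCommMonoid A] [Module R A]
    [Module (MvPolynomial σ R) A] (D : Derivation R (MvPolynomial σ R) A) (p : MvPolynomial σ R) :
    D p = ∑ i, pderiv i p • D (X i) := by
  classical
  induction p using MvPolynomial.induction_on with
  | C a => simp only [derivation_C, zero_smul, Finset.sum_const_zero]
  | add p q hp hq => simp only [map_add, add_smul, Finset.sum_add_distrib, hp, hq]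
  | mul_X p j hp =>
    simp [Derivation.leibniz, hp, add_smul, Finset.sum_add_distrib, Finset.smul_sum, mul_smul,
      pderiv_X, Pi.single_apply]

lemma derivation_pderiv_X {A : Type*} [AddCommMonoid A] [Module R A]
    [Module (MvPolynomial σ R) A] (D : Derivation R (MvPolynomial σ R) A) (i j : σ) :
    D (pderiv i (X j)) = 0 := by
  classical
  rw [pderiv_X]
  rcases eq_or_ne i j with rfl | h
  · rw [Pi.single_eq_same, Derivation.map_one_eq_zero]
  · rw [Pi.single_eq_of_ne h.symm, map_zero]

lemma totalDegree_pderiv_lt {i : σ} {p : MvPolynomial σ R} (h : pderiv i p ≠ 0) :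
    (pderiv i p).totalDegree < p.totalDegree := by
  obtain ⟨m, hm, hdeg⟩ := Finset.exists_mem_eq_sup _ (support_nonempty.mpr h)
    fun m : σ →₀ ℕ => m.sum fun _ e => e
  rw [mem_support_iff, coeff_pderiv] at hm
  calc (pderiv i p).totalDegree = m.sum fun _ e => e := hdeg
    _ < (m + Finsupp.single i 1).sum fun _ e => e := by
      rw [Finsupp.sum_add_index' (fun _ => rfl) (fun _ _ _ => rfl), Finsupp.sum_single_index rfl]
      exact Nat.lt_succ_self _
    _ ≤ p.totalDegree := le_totalDegree (mem_support_iff.mpr (left_ne_zero_of_mul hm))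

end Polynomial

section VectorField

variable {𝕜 n}

lemma lie_pderiv_apply_X (i j : Fin n) (D : Vect 𝕜 n) :
    ⁅(pderiv i : Vect 𝕜 n), D⁆ (X j) = pderiv i (D (X j)) := by
  rw [Derivation.commutator_apply, derivation_pderiv_X, sub_zero]

lemma mem_VectP {p : ℤ} {D : Vect 𝕜 n} : D ∈ VectP 𝕜 n p ↔ ⁅euler 𝕜 n, D⁆ = (p : 𝕜) • D :=
  Module.End.mem_eigenspace_iff

lemma lie_mem_VectP {p q : ℤ} {D D' : Vect 𝕜 n} (hD : D ∈ VectP 𝕜 n p)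
    (hD' : D' ∈ VectP 𝕜 n q) : ⁅D, D'⁆ ∈ VectP 𝕜 n (p + q) := by
  rw [VectP, Int.cast_add]
  exact lie_mem_eigenspace_ad hD hD'

lemma disjoint_VectP [CharZero 𝕜] {p q : ℤ} (h : p ≠ q) :
    Disjoint (VectP 𝕜 n p) (VectP 𝕜 n q) :=
  Module.End.disjoint_genEigenspace _ (Int.cast_injective.ne h) 1 1

lemma mem_VectP_neg_one_of_lie_pderiv_eq_zero {D : Vect 𝕜 n}
    (h : ∀ i, ⁅(pderiv i : Vect 𝕜 n), D⁆ = 0) : D ∈ VectP 𝕜 n (-1) := by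
  rw [mem_VectP]
  refine derivation_ext fun j => ?_
  have hj : euler 𝕜 n (D (X j)) = 0 := by
    rw [derivation_apply_eq_sum_pderiv_smul]
    refine Finset.sum_eq_zero fun i _ => ?_
    rw [← lie_pderiv_apply_X, h i, Derivation.zero_apply, zero_smul]
  have hX : euler 𝕜 n (X j) = X j := mkDerivation_X 𝕜 _ j
  rw [Derivation.commutator_apply, hj, hX, zero_sub, Derivation.smul_apply, Int.cast_neg,
    Int.cast_one, neg_one_smul]

lemma pderiv_mem_VectP_neg_one (i : Fin n) : (pderiv i : Vect 𝕜 n) ∈ VectP 𝕜 n (-1) := by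
  refine mem_VectP_neg_one_of_lie_pderiv_eq_zero fun j => derivation_ext fun k => ?_
  rw [lie_pderiv_apply_X, derivation_pderiv_X, Derivation.zero_apply]

lemma eq_zero_of_lie_VectP_neg_one_eq_zero [CharZero 𝕜] {p : ℤ} (hp : p ≠ -1) {D : Vect 𝕜 n}
    (hD : D ∈ VectP 𝕜 n p) (h : ∀ v ∈ VectP 𝕜 n (-1), ⁅v, D⁆ = 0) : D = 0 :=
  Submodule.disjoint_def.mp (disjoint_VectP hp) D hD <|
    mem_VectP_neg_one_of_lie_pderiv_eq_zero fun i => h _ (pderiv_mem_VectP_neg_one i)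

/-- The degree of a polynomial vector field: the largest total degree of its coefficients. It is a
natural number, so both `0` and the nonzero constant fields have degree `0`. -/
noncomputable def Vect.degree (D : Vect 𝕜 n) : ℕ :=
  Finset.univ.sup fun j => (D (X j)).totalDegree

lemma degree_lie_pderiv_lt {i : Fin n} {D : Vect 𝕜 n} (h : ⁅(pderiv i : Vect 𝕜 n), D⁆ ≠ 0) :
    Vect.degree ⁅(pderiv i : Vect 𝕜 n), D⁆ < Vect.degree D := by
  have hlt : ∀ j, pderiv i (D (X j)) ≠ 0 → (pderiv i (D (X j))).totalDegree < Vect.degree D :=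
    fun j hj => (totalDegree_pderiv_lt hj).trans_le <|
      Finset.le_sup (f := fun j => (D (X j)).totalDegree) (Finset.mem_univ j)
  have hpos : 0 < Vect.degree D := by
    contrapose! h
    refine derivation_ext fun j => ?_
    rw [lie_pderiv_apply_X, Derivation.zero_apply]
    by_contra hj
    exact absurd (hlt j hj) (by omega)
  refine (Finset.sup_lt_iff hpos).mpr fun j _ => ?_
  rw [lie_pderiv_apply_X]
  rcases eq_or_ne (pderiv i (D (X j))) 0 with hj | hj
  · rwa [hj, totalDegree_zero]
  · exact hlt j hj

lemma inf_VectP_neg_one_ne_bot {W : Submodule 𝕜 (Vect 𝕜 n)} (hW : W ≠ ⊥)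
    (hst : ∀ v ∈ VectP 𝕜 n (-1), ∀ D ∈ W, ⁅v, D⁆ ∈ W) : W ⊓ VectP 𝕜 n (-1) ≠ ⊥ := by
  obtain ⟨D, ⟨hDW, hD⟩, hmin⟩ := (measure Vect.degree).wf.has_min
    {D : Vect 𝕜 n | D ∈ W ∧ D ≠ 0} (W.ne_bot_iff.mp hW)
  refine (Submodule.ne_bot_iff _).mpr ⟨D, ⟨hDW, ?_⟩, hD⟩
  refine mem_VectP_neg_one_of_lie_pderiv_eq_zero fun i => ?_
  by_contra hi
  exact hmin _ ⟨hst _ (pderiv_mem_VectP_neg_one i) D hDW, hi⟩ (degree_lie_pderiv_lt hi)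

variable {L : LieSubalgebra 𝕜 (Vect 𝕜 n)}

lemma VectP_neg_one_le_of_lie_mem (hV : VectP 𝕜 n (-1) ≤ L.toSubmodule)
    (hirr : IsIrreducibleRep 𝕜 n L) {W : Submodule 𝕜 (Vect 𝕜 n)} (hW : W ≠ ⊥)
    (hst : ∀ x ∈ L, ∀ D ∈ W, ⁅x, D⁆ ∈ W) : VectP 𝕜 n (-1) ≤ W := by
  have hmem : ∀ x ∈ L.toSubmodule ⊓ VectP 𝕜 n 0, ∀ y ∈ W ⊓ VectP 𝕜 n (-1),
      ⁅x, y⁆ ∈ W ⊓ VectP 𝕜 n (-1) := fun x hx y hy =>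
    ⟨hst x hx.1 y hy.1, zero_add (-1 : ℤ) ▸ lie_mem_VectP hx.2 hy.2⟩
  have hF := hirr.2 (W ⊓ VectP 𝕜 n (-1)) (le_inf (inf_le_right.trans hV) inf_le_right) hmem
  rw [inf_eq_right.mpr hV] at hF
  exact inf_eq_right.mp (hF.resolve_left (inf_VectP_neg_one_ne_bot hW fun v hv => hst v (hV hv)))

lemma VectP_neg_one_le_map_subtype (hV : VectP 𝕜 n (-1) ≤ L.toSubmodule)
    (hirr : IsIrreducibleRep 𝕜 n L) {M : LieSubalgebra 𝕜 (Vect 𝕜 n)} (hLM : L ≤ M)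
    {P : Submodule 𝕜 M} (hP : P ≠ ⊥) (hst : ∀ x : M, (x : Vect 𝕜 n) ∈ L → ∀ y ∈ P, ⁅x, y⁆ ∈ P) :
    VectP 𝕜 n (-1) ≤ P.map M.toSubmodule.subtype := by
  refine VectP_neg_one_le_of_lie_mem hV hirr ?_ ?_
  · exact fun h => hP <| Submodule.map_injective_of_injective M.toSubmodule.injective_subtype <|
      h.trans (Submodule.map_bot _).symm
  · rintro x hx _ ⟨y, hy, rfl⟩
    exact ⟨⁅(⟨x, hLM hx⟩ : M), y⁆, hst ⟨x, hLM hx⟩ hx y hy, rfl⟩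

lemma hasTrivialRadical_of_isIrreducibleRep [CharZero 𝕜]
    (hV : VectP 𝕜 n (-1) ≤ L.toSubmodule) (hirr : IsIrreducibleRep 𝕜 n L)
    (h1 : L.toSubmodule ⊓ VectP 𝕜 n 1 ≠ ⊥) : LieAlgebra.HasTrivialRadical 𝕜 L := by
  rw [LieAlgebra.hasTrivialRadical_iff_no_abelian_ideals]
  intro I hI
  by_contra hne
  have hVI : ∀ v (hv : v ∈ VectP 𝕜 n (-1)), (⟨v, hV hv⟩ : L) ∈ I := by
    intro v hv
    obtain ⟨y, hy, rfl⟩ := VectP_neg_one_le_map_subtype hV hirr le_rfl (P := I.toSubmodule)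
      (by rwa [Ne, LieSubmodule.toSubmodule_eq_bot]) (fun x _ y hy => I.lie_mem hy) hv
    exact hy
  obtain ⟨Y, ⟨hYL, hY⟩, hY0⟩ := (Submodule.ne_bot_iff _).mp h1
  have hVVY : ∀ v ∈ VectP 𝕜 n (-1), ∀ w ∈ VectP 𝕜 n (-1), ⁅w, ⁅v, Y⁆⁆ = 0 := by
    intro v hv w hw
    have hvY : ⁅(⟨v, hV hv⟩ : L), (⟨Y, hYL⟩ : L)⁆ ∈ I := lie_mem_left 𝕜 L I _ _ (hVI v hv)
    have hwvY := hI.trivial ⟨_, hVI w hw⟩ ⟨_, hvY⟩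
    exact congrArg (fun z : I => ((z : L) : Vect 𝕜 n)) hwvY
  refine hY0 (eq_zero_of_lie_VectP_neg_one_eq_zero (by norm_num) hY fun v hv => ?_)
  exact eq_zero_of_lie_VectP_neg_one_eq_zero (by norm_num) (lie_mem_VectP hv hY) (hVVY v hv)

theorem statement14_general [CharZero 𝕜] (hV : VectP 𝕜 n (-1) ≤ L.toSubmodule)
    (hirr : IsIrreducibleRep 𝕜 n L) (h1 : L.toSubmodule ⊓ VectP 𝕜 n 1 ≠ ⊥)
    {M : LieSubalgebra 𝕜 (Vect 𝕜 n)} [FiniteDimensional 𝕜 M] (hLM : L ≤ M) : M = L := by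
  have hLfin : FiniteDimensional 𝕜 L := Submodule.finiteDimensional_of_le (S₂ := M.toSubmodule) hLM
  have hrad := hasTrivialRadical_of_isIrreducibleRep hV hirr h1
  let L' : LieSubalgebra 𝕜 M := LieSubalgebra.ofLe hLM
  have hmem (x : M) : x ∈ L' ↔ (x : Vect 𝕜 n) ∈ L := LieSubalgebra.mem_ofLe hLM x
  have hkilling : LieAlgebra.IsKilling 𝕜 L' := (LieSubalgebra.equivOfLe hLM).isKilling
  have htop : L' = ⊤ := by
    refine eq_top_of_forall_not_disjoint L' fun N hN hdisj => hirr.1 ?_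
    rw [← LieSubmodule.disjoint_toSubmodule, Submodule.disjoint_def] at hdisj
    refine (Submodule.eq_bot_iff _).mpr fun v ⟨hvL, hv⟩ => ?_
    obtain ⟨y, hyN, rfl⟩ := VectP_neg_one_le_map_subtype hV hirr hLM (P := N.toSubmodule)
      (by rwa [Ne, LieSubmodule.toSubmodule_eq_bot])
      (fun x hx y hy => N.lie_mem (x := ⟨x, (hmem x).mpr hx⟩) hy) hv
    rw [hdisj y ((hmem y).mpr hvL) hyN, map_zero]
  refine le_antisymm (fun x hx => ?_) hLM
  have hxL' : (⟨x, hx⟩ : M) ∈ L' := htop ▸ LieSubalgebra.mem_top _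
  exact (hmem _).mp hxL'

end VectorField

/-- Let `E = ℂ^n` (`n ≥ 1`) and `L = L₋₁ ⊕ L₀ ⊕ L₁` an irreducible graded Lie subalgebra of
`Vect_pol(E)` with `L₋₁ = Vect₋₁(E)` and `L₁ ≠ 0`.  Then every finite-dimensional Lie
subalgebra `L'` of `Vect_pol(E)` containing `L` equals `L`. -/
theorem statement14 (n : ℕ) (hn : 0 < n)
    (L : LieSubalgebra ℂ (Vect ℂ n))
    (hgraded : L.toSubmodule =
      (L.toSubmodule ⊓ VectP ℂ n (-1)) ⊔ (L.toSubmodule ⊓ VectP ℂ n 0) ⊔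
        (L.toSubmodule ⊓ VectP ℂ n 1))
    (hm1 : L.toSubmodule ⊓ VectP ℂ n (-1) = VectP ℂ n (-1))
    (hirr : IsIrreducibleRep ℂ n L)
    (h1 : L.toSubmodule ⊓ VectP ℂ n 1 ≠ ⊥) :
    ∀ L' : LieSubalgebra ℂ (Vect ℂ n), FiniteDimensional ℂ L' → L ≤ L' → L' = L := by
  intro M _ hLM
  exact statement14_general (inf_eq_right.mp hm1) hirr h1 hLM
end
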